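/- arXiv:math/9807142 — 2 statements merged into one kernel-verified Lean document; each statement's English description precedes it below -/
import Mathlib

section
/- Let h ∈ ℝ with 2h not a nonpositive integer. Then, as linear operators on ℂ[z], l₁∘F − F∘l₁ = id, l₀∘F − F∘l₀ = F, and l₋₁∘F − F∘l₋₁ = F∘F. -/
open Polynomial

/-- Multiplication by `z` on `ℂ[z]`: the generator `l₋₁`. -/
noncomputable def lNeg : Module.End ℂ (Polynomial ℂ) :=
  LinearMap.mulLeft ℂ (Polynomial.X : Polynomial ℂ)

/-- The differentiation operator `D = d/dz` on `ℂ[z]`. -/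
noncomputable def Dop : Module.End ℂ (Polynomial ℂ) :=
  Polynomial.derivative

/-- The generator `l₀ = z·d/dz + h·id`. -/
noncomputable def lZero (h : ℝ) : Module.End ℂ (Polynomial ℂ) :=
  lNeg * Dop + (h : ℂ) • 1

/-- The generator `l₁ = z·d²/dz² + 2h·d/dz`. -/
noncomputable def lOne (h : ℝ) : Module.End ℂ (Polynomial ℂ) :=
  lNeg * Dop * Dop + ((2 * h : ℝ) : ℂ) • Dop

/-!
Put `E = ξ + 2h` with `ξ = z·d/dz`, so that `l₁ = E·d/dz`, `l₀ = ξ + h` and `F E = z`. Each of the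
three identities `A = B` follows by cancelling `E` on the right: `A E = B E` no longer involves an
inverse, and it is a consequence of `[d/dz, z] = 1`.
-/

namespace WeylPair

variable {R A : Type*} [CommSemiring R] [Ring A] [Algebra R A]

/-- The shifted Euler operator `ξ + c`, where `ξ = x d`, for elements `x`, `d` of an algebra that
play the roles of `z` and `d/dz`. -/
def shiftedEuler (x d : A) (c : R) : A :=
  x * d + c • 1

variable {x d F : A} {b c : R}

theorem commute_mul_shiftedEuler : Commute (x * d) (shiftedEuler x d c) :=
  (Commute.refl _).add_right ((Commute.one_right _).smul_right c)

theorem commute_shiftedEuler : Commute (shiftedEuler x d b) (shiftedEuler x d c) :=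
  commute_mul_shiftedEuler.add_left ((Commute.one_left _).smul_left b)

theorem shiftedEuler_mul_d (c : R) : shiftedEuler x d c * d = x * d * d + c • d := by
  rw [shiftedEuler, add_mul, smul_one_mul]

theorem shiftedEuler_mul_x (hdx : d * x = x * d + 1) (c : R) :
    shiftedEuler x d c * x = x * shiftedEuler x d c + x := by
  rw [shiftedEuler, add_mul, mul_assoc, hdx, mul_add, mul_add, smul_one_mul, mul_smul_one, mul_one]
  abel

theorem lie_shiftedEuler_mul_d_eq_one (hdx : d * x = x * d + 1)
    (hE : IsRightRegular (shiftedEuler x d c)) (hF : F * shiftedEuler x d c = x) :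
    ⁅shiftedEuler x d c * d, F⁆ = 1 := by
  set E := shiftedEuler x d c
  refine hE ?_
  calc ⁅E * d, F⁆ * E
      = E * (d * (F * E)) - F * E * d * E := by rw [Ring.lie_def]; noncomm_ring
    _ = E * (x * d + 1) - x * d * E := by rw [hF, hdx]
    _ = 1 * E := by rw [commute_mul_shiftedEuler.eq, mul_add, add_sub_cancel_left, mul_one, one_mul]

theorem lie_shiftedEuler_eq_self (hdx : d * x = x * d + 1)
    (hE : IsRightRegular (shiftedEuler x d c)) (hF : F * shiftedEuler x d c = x) (b : R) :
    ⁅shiftedEuler x d b, F⁆ = F := by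
  set E := shiftedEuler x d c
  set E' := shiftedEuler x d b
  refine hE ?_
  calc ⁅E', F⁆ * E
      = E' * (F * E) - F * (E' * E) := by rw [Ring.lie_def]; noncomm_ring
    _ = E' * x - x * E' := by rw [commute_shiftedEuler.eq, ← mul_assoc F, hF]
    _ = F * E := by rw [shiftedEuler_mul_x hdx, add_sub_cancel_left, hF]

theorem lie_x_eq_mul_self (hdx : d * x = x * d + 1)
    (hE : IsRightRegular (shiftedEuler x d c)) (hF : F * shiftedEuler x d c = x) :
    ⁅x, F⁆ = F * F := by
  have hxE := eq_sub_of_add_eq (shiftedEuler_mul_x hdx c).symm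
  set E := shiftedEuler x d c
  refine hE ?_
  calc ⁅x, F⁆ * E
      = x * (F * E) - F * (x * E) := by rw [Ring.lie_def]; noncomm_ring
    _ = x * x - (x * x - F * x) := by rw [hxE, mul_sub, ← mul_assoc F, hF]
    _ = F * F * E := by rw [sub_sub_cancel, mul_assoc, hF]

end WeylPair

namespace VermaModule

open WeylPair

variable {R : Type*} [CommRing R]

variable (R) in
/-- Multiplication by `z` on `R[z]`; for `R = ℂ` this is `lNeg`. -/
noncomputable def mulX : Module.End R R[X] :=
  LinearMap.mulLeft R X

variable (R) in
/-- The operator `d/dz` as an element of the algebra of endomorphisms of `R[z]`; for `R = ℂ` this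
is `Dop`. -/
noncomputable def ddX : Module.End R R[X] :=
  derivative

theorem linearMap_ext_X_pow {M : Type*} [AddCommMonoid M] [Module R M] {f g : R[X] →ₗ[R] M}
    (hfg : ∀ n : ℕ, f (X ^ n) = g (X ^ n)) : f = g :=
  (basisMonomials R).ext fun n => by simpa [monomial_one_right_eq_X_pow] using hfg n

theorem ddX_mul_mulX : ddX R * mulX R = mulX R * ddX R + 1 :=
  LinearMap.ext fun p => by simp [ddX, mulX, add_comm]

theorem shiftedEuler_X_pow (c : R) (n : ℕ) :
    shiftedEuler (mulX R) (ddX R) c (X ^ n) = (n + c) • X ^ n := by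
  cases n with
  | zero => simp [shiftedEuler, mulX, ddX]
  | succ n =>
    simp only [shiftedEuler, mulX, ddX, LinearMap.add_apply, Module.End.mul_apply,
      LinearMap.smul_apply, Module.End.one_apply, LinearMap.mulLeft_apply, derivative_X_pow_succ,
      smul_eq_C_mul, map_add, map_natCast, map_one]
    push_cast
    ring

theorem isRightRegular_shiftedEuler {c : R} (hc : ∀ n : ℕ, IsUnit (n + c)) :
    IsRightRegular (shiftedEuler (mulX R) (ddX R) c) := fun G H hGH =>
  linearMap_ext_X_pow fun n => (hc n).smul_left_cancel.mp <| by
    simpa only [Module.End.mul_apply, shiftedEuler_X_pow, map_smul] using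
      LinearMap.congr_fun hGH (X ^ n)

theorem isUnit_of_smul_eq_X_pow {a : R} {p : R[X]} {n : ℕ} (h : a • p = X ^ n) : IsUnit a :=
  .of_mul_eq_one (p.coeff n) <| by rw [← smul_eq_mul, ← coeff_smul, h, coeff_X_pow_self]

theorem mul_shiftedEuler_eq_mulX {c : R} {F : Module.End R R[X]}
    (hF : ∀ n : ℕ, ((n : R) + c) • F (X ^ n) = X ^ (n + 1)) :
    F * shiftedEuler (mulX R) (ddX R) c = mulX R :=
  linearMap_ext_X_pow fun n => by
    rw [Module.End.mul_apply, shiftedEuler_X_pow, map_smul, hF, pow_succ']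
    rfl

end VermaModule

theorem natCast_add_two_mul_ofReal_ne_zero {h : ℝ} (hh : ∀ n : ℕ, 2 * h ≠ -(n : ℝ)) (n : ℕ) :
    (n : ℂ) + 2 * h ≠ 0 := fun hn =>
  hh n <| eq_neg_of_add_eq_zero_right <| by exact_mod_cast hn

open WeylPair VermaModule in
theorem stmt1_general {R : Type*} [CommRing R] (h : R) (F : Module.End R R[X])
    (hF : ∀ n : ℕ, ((n : R) + 2 * h) • F (X ^ n) = X ^ (n + 1)) :
    ⁅mulX R * ddX R * ddX R + (2 * h) • ddX R, F⁆ = 1 ∧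
    ⁅mulX R * ddX R + h • 1, F⁆ = F ∧
    ⁅mulX R, F⁆ = F * F := by
  have hE := isRightRegular_shiftedEuler fun n => isUnit_of_smul_eq_X_pow (hF n)
  have hFE := mul_shiftedEuler_eq_mulX hF
  rw [← shiftedEuler_mul_d]
  exact ⟨lie_shiftedEuler_mul_d_eq_one ddX_mul_mulX hE hFE,
    lie_shiftedEuler_eq_self ddX_mul_mulX hE hFE h, lie_x_eq_mul_self ddX_mul_mulX hE hFE⟩

/-- if `2h` is not a nonpositive integer and `F` is the operator with
`F(zⁿ) = z^(n+1)/(n+2h)`, then `[l₁, F] = id`, `[l₀, F] = F`, `[l₋₁, F] = F²`. -/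
theorem stmt1 (h : ℝ) (hh : ∀ n : ℕ, 2 * h ≠ -(n : ℝ))
    (F : Module.End ℂ (Polynomial ℂ))
    (hF : ∀ n : ℕ, F (Polynomial.X ^ n) = ((n : ℂ) + 2 * h)⁻¹ • Polynomial.X ^ (n + 1)) :
    lOne h * F - F * lOne h = 1 ∧
    lZero h * F - F * lZero h = F ∧
    lNeg * F - F * lNeg = F * F := by
  rw [lOne, Complex.ofReal_mul, Complex.ofReal_ofNat]
  exact stmt1_general (h : ℂ) F fun n => by
    rw [hF, smul_inv_smul₀ (natCast_add_two_mul_ofReal_ne_zero hh n)]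
end

section
/- Let h ∈ ℝ. There exists a linear subspace U of ℂ[z] with U ≠ {0} and U ≠ ℂ[z] that is invariant under all three operators l₋₁, l₀, l₁ if and only if 2h is a nonpositive integer (i.e. h = −n₀/2 for some nonnegative integer n₀); in that case the span of {z^m : m ≥ n₀+1} is such an invariant subspace. In other words, the Verma module V_h over sl(2,ℂ) is nondegenerate (contains no proper nonzero submodule) exactly when h ≠ −n/2 for all nonnegative integers n. -/
open Polynomial

/-!
Coefficientwise, `(l₁ p)ₖ = (k + 1) (k + 2h) pₖ₊₁`, so `l₁` lowers degrees. If `k + 2h` never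
vanishes, the kernel of `l₁` consists of the constants; a nonzero element of minimal degree in an
invariant subspace lies in this kernel, and multiplication by `z` then produces every polynomial
from it. If `n + 2h = 0`, the factor `k + 2h` cuts the passage from `z ^ (n + 1)` down to `z ^ n`,
and the multiples of `z ^ (n + 1)` form an invariant subspace.
-/

theorem exists_mem_ne_zero_map_eq_zero_of_degree_lt {R : Type*} [Semiring R]
    {f : Module.End R R[X]} (hf : ∀ p ≠ 0, (f p).degree < p.degree)
    {U : Submodule R R[X]} (hU : U ≠ ⊥) (hfU : ∀ p ∈ U, f p ∈ U) :
    ∃ p ∈ U, p ≠ 0 ∧ f p = 0 := by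
  obtain ⟨p, ⟨hpU, hp⟩, hmin⟩ := exists_minimalFor_of_wellFoundedLT
    (fun p : R[X] => p ∈ U ∧ p ≠ 0) degree (U.ne_bot_iff.mp hU)
  refine ⟨p, hpU, hp, ?_⟩
  by_contra hfp
  exact (hf p hp).not_ge (hmin ⟨hfU p hpU, hfp⟩ (hf p hp).le)

section CommSemiring

variable {R : Type*} [CommSemiring R]

/-- The generator `l₀ = z·d/dz + h` of the Verma module `V_h`, realized on `R[X]` for an arbitrary
coefficient ring and weight; it agrees with `lZero` over `ℂ`. -/
noncomputable def vermaZero (h : R) : Module.End R R[X] :=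
  LinearMap.mulLeft R X * derivative + h • 1

/-- The generator `l₁ = z·d²/dz² + 2h·d/dz` of the Verma module `V_h`, realized on `R[X]` for an
arbitrary coefficient ring and weight; it agrees with `lOne` over `ℂ`. -/
noncomputable def vermaOne (h : R) : Module.End R R[X] :=
  LinearMap.mulLeft R X * derivative * derivative + (2 * h) • derivative

/-- `U` is a submodule of the Verma module `V_h`: a subspace of `R[X]` stable under the three
generators, `l₋₁` being written out as multiplication by `X`. -/
def IsVermaInvariant (h : R) (U : Submodule R R[X]) : Prop :=
  (∀ p ∈ U, X * p ∈ U) ∧ (∀ p ∈ U, vermaZero h p ∈ U) ∧ (∀ p ∈ U, vermaOne h p ∈ U)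

variable (R) in
/-- The span of the powers `X ^ m` with `m ≥ n`, the candidate for a proper submodule of `V_h`. It
is encoded as the span of a set of polynomials rather than as the ideal generated by `X ^ n`. -/
noncomputable def spanXPowGE (n : ℕ) : Submodule R R[X] :=
  Submodule.span R {q | ∃ m : ℕ, n ≤ m ∧ q = X ^ m}

theorem vermaZero_apply (h : R) (p : R[X]) :
    vermaZero h p = X * derivative p + h • p :=
  rfl

theorem vermaOne_apply (h : R) (p : R[X]) :
    vermaOne h p = X * derivative (derivative p) + (2 * h) • derivative p :=
  rfl

theorem coeff_vermaZero (h : R) (p : R[X]) (k : ℕ) :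
    (vermaZero h p).coeff k = (k + h) * p.coeff k := by
  cases k with
  | zero => simp [vermaZero_apply]
  | succ k =>
    simp only [vermaZero_apply, coeff_add, coeff_X_mul, coeff_smul, coeff_derivative, smul_eq_mul,
      Nat.cast_succ]
    ring

theorem coeff_vermaOne (h : R) (p : R[X]) (k : ℕ) :
    (vermaOne h p).coeff k = (k + 1) * (k + 2 * h) * p.coeff (k + 1) := by
  cases k with
  | zero => simp [vermaOne_apply, coeff_derivative]
  | succ k =>
    simp only [vermaOne_apply, coeff_add, coeff_X_mul, coeff_smul, coeff_derivative, smul_eq_mul,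
      Nat.cast_succ]
    ring

theorem degree_vermaOne_lt (h : R) {p : R[X]} (hp : p ≠ 0) :
    (vermaOne h p).degree < p.degree := by
  rw [degree_eq_natDegree hp, degree_lt_iff_coeff_zero]
  intro k hk
  rw [coeff_vermaOne, coeff_eq_zero_of_natDegree_lt (Nat.lt_succ_of_le hk), mul_zero]

theorem eq_top_of_one_mem_of_X_mul_mem {U : Submodule R R[X]} (h_one : 1 ∈ U)
    (hX : ∀ p ∈ U, X * p ∈ U) : U = ⊤ := by
  refine U.eq_top_iff'.mpr fun p => ?_
  induction p using Polynomial.induction_on with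
  | C a => simpa [smul_eq_C_mul] using U.smul_mem a h_one
  | add p q hp hq => exact U.add_mem hp hq
  | monomial n a ih =>
    convert hX _ ih using 1
    ring

theorem mem_spanXPowGE_iff {n : ℕ} {p : R[X]} : p ∈ spanXPowGE R n ↔ X ^ n ∣ p := by
  constructor
  · intro hp
    induction hp using Submodule.span_induction with
    | mem q hq =>
      obtain ⟨m, hm, rfl⟩ := hq
      exact pow_dvd_pow X hm
    | zero => exact dvd_zero _
    | add q r _ _ hq hr => exact dvd_add hq hr
    | smul a q _ hq => exact dvd_smul_of_dvd a hq
  · rintro ⟨q, rfl⟩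
    induction q using Polynomial.induction_on' with
    | add q r hq hr => simpa only [mul_add] using Submodule.add_mem _ hq hr
    | monomial m a =>
      have hpow : X ^ (n + m) ∈ spanXPowGE R n :=
        Submodule.subset_span ⟨n + m, Nat.le_add_right n m, rfl⟩
      rw [X_pow_mul_monomial, ← smul_X_eq_monomial, add_comm]
      exact Submodule.smul_mem _ a hpow

theorem spanXPowGE_ne_bot [Nontrivial R] (n : ℕ) : spanXPowGE R n ≠ ⊥ :=
  (Submodule.ne_bot_iff _).mpr ⟨X ^ n, mem_spanXPowGE_iff.mpr dvd_rfl, (monic_X_pow n).ne_zero⟩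

theorem spanXPowGE_succ_ne_top [Nontrivial R] (n : ℕ) : spanXPowGE R (n + 1) ≠ ⊤ := by
  intro htop
  have hdvd : (X : R[X]) ^ (n + 1) ∣ 1 := mem_spanXPowGE_iff.mp (htop ▸ Submodule.mem_top)
  simpa using X_pow_dvd_iff.mp hdvd 0 n.succ_pos

theorem isVermaInvariant_spanXPowGE {h : R} {n : ℕ} (hn : (n : R) + 2 * h = 0) :
    IsVermaInvariant h (spanXPowGE R (n + 1)) := by
  simp only [IsVermaInvariant, mem_spanXPowGE_iff]
  refine ⟨fun p hp => hp.mul_left X, fun p hp => X_pow_dvd_iff.mpr fun k hk => ?_,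
    fun p hp => X_pow_dvd_iff.mpr fun k hk => ?_⟩
  · rw [coeff_vermaZero, X_pow_dvd_iff.mp hp k hk, mul_zero]
  · rw [coeff_vermaOne]
    obtain rfl | hkn := Nat.eq_or_lt_of_le (Nat.le_of_lt_succ hk)
    · rw [hn, mul_zero, zero_mul]
    · rw [X_pow_dvd_iff.mp hp (k + 1) (Nat.succ_lt_succ hkn), mul_zero]

theorem eq_C_of_vermaOne_eq_zero [NoZeroDivisors R] [CharZero R] {h : R}
    (hh : ∀ n : ℕ, (n : R) + 2 * h ≠ 0) {p : R[X]} (hp : vermaOne h p = 0) :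
    p = C (p.coeff 0) := by
  ext (_ | k)
  · rw [coeff_C_zero]
  · have hcoeff : ((k : R) + 1) * (k + 2 * h) * p.coeff (k + 1) = 0 := by
      rw [← coeff_vermaOne, hp, coeff_zero]
    rw [coeff_C_succ]
    exact (mul_eq_zero.mp hcoeff).resolve_left
      (mul_ne_zero (Nat.cast_add_one_ne_zero k) (hh k))

end CommSemiring

section Field

variable {K : Type*} [Field K] [CharZero K]

theorem IsVermaInvariant.eq_top {h : K} (hh : ∀ n : ℕ, (n : K) + 2 * h ≠ 0)
    {U : Submodule K K[X]} (hU : IsVermaInvariant h U) (hbot : U ≠ ⊥) : U = ⊤ := by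
  obtain ⟨hX, -, hOne⟩ := hU
  obtain ⟨p, hpU, hp, hker⟩ := exists_mem_ne_zero_map_eq_zero_of_degree_lt
    (fun _ => degree_vermaOne_lt h) hbot hOne
  obtain ⟨c, rfl⟩ : ∃ c, p = C c := ⟨_, eq_C_of_vermaOne_eq_zero hh hker⟩
  have hc : c ≠ 0 := C_ne_zero.mp hp
  have h_one : (1 : K[X]) ∈ U := by
    simpa [smul_C, hc] using U.smul_mem c⁻¹ hpU
  exact eq_top_of_one_mem_of_X_mul_mem h_one hX

theorem stmt15_general (h : K) :
    ((∃ U : Submodule K K[X], U ≠ ⊥ ∧ U ≠ ⊤ ∧ IsVermaInvariant h U) ↔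
      ∃ n₀ : ℕ, h = -(n₀ : K) / 2) ∧
    (∀ n₀ : ℕ, h = -(n₀ : K) / 2 →
      spanXPowGE K (n₀ + 1) ≠ ⊥ ∧ spanXPowGE K (n₀ + 1) ≠ ⊤ ∧
        IsVermaInvariant h (spanXPowGE K (n₀ + 1))) := by
  have weight_iff (n : ℕ) : h = -(n : K) / 2 ↔ (n : K) + 2 * h = 0 := by
    rw [eq_div_iff two_ne_zero, eq_neg_iff_add_eq_zero, add_comm, mul_comm]
  simp only [weight_iff]
  have proper_invariant (n : ℕ) (hn : (n : K) + 2 * h = 0) :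
      spanXPowGE K (n + 1) ≠ ⊥ ∧ spanXPowGE K (n + 1) ≠ ⊤ ∧
        IsVermaInvariant h (spanXPowGE K (n + 1)) :=
    ⟨spanXPowGE_ne_bot _, spanXPowGE_succ_ne_top n, isVermaInvariant_spanXPowGE hn⟩
  refine ⟨⟨?_, fun ⟨n, hn⟩ => ⟨_, proper_invariant n hn⟩⟩, proper_invariant⟩
  rintro ⟨U, hbot, htop, hU⟩
  by_contra! hh
  exact htop (hU.eq_top hh hbot)

end Field

theorem isVermaInvariant_ofReal_iff {h : ℝ} {U : Submodule ℂ ℂ[X]} :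
    IsVermaInvariant (h : ℂ) U ↔
      (∀ p ∈ U, lNeg p ∈ U) ∧ (∀ p ∈ U, lZero h p ∈ U) ∧ (∀ p ∈ U, lOne h p ∈ U) := by
  have lOne_eq : lOne h = vermaOne (h : ℂ) := by
    rw [lOne, Complex.ofReal_mul, Complex.ofReal_ofNat]
    rfl
  rw [lOne_eq]
  rfl

/-- the Verma module `V_h` over `sl(2,ℂ)` has a proper nonzero invariant
subspace iff `2h` is a nonpositive integer (`h = −n₀/2`), in which case the span of
`{z^m : m ≥ n₀+1}` is such a subspace. -/
theorem stmt15 (h : ℝ) :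
    ((∃ U : Submodule ℂ (Polynomial ℂ), U ≠ ⊥ ∧ U ≠ ⊤ ∧
        (∀ p ∈ U, lNeg p ∈ U) ∧ (∀ p ∈ U, lZero h p ∈ U) ∧ (∀ p ∈ U, lOne h p ∈ U)) ↔
      ∃ n₀ : ℕ, h = -(n₀ : ℝ) / 2) ∧
    (∀ n₀ : ℕ, h = -(n₀ : ℝ) / 2 →
      ∀ U : Submodule ℂ (Polynomial ℂ),
        U = Submodule.span ℂ {q : Polynomial ℂ | ∃ m : ℕ, n₀ + 1 ≤ m ∧ q = Polynomial.X ^ m} →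
        U ≠ ⊥ ∧ U ≠ ⊤ ∧
        (∀ p ∈ U, lNeg p ∈ U) ∧ (∀ p ∈ U, lZero h p ∈ U) ∧ (∀ p ∈ U, lOne h p ∈ U)) := by
  simp only [← isVermaInvariant_ofReal_iff, forall_eq]
  exact_mod_cast stmt15_general (h : ℂ)
end
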